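/- Let p be a rational prime dividing the index i(K) of a number field K of degree 9 defined by x^9 + ax + b with ab ≠ 0. Then p ∈ {2, 3}. -/

import Mathlib

/-!
Let `p` be a prime that does not divide `n * (n - 1)`, with `n < 2 * p`. If the primes `P` above `p`
admit pairwise distinct monic irreducible polynomials `g P` over `𝔽_p` with `deg (g P) = f(P)`, the
Chinese remainder theorem gives an integer `η` at which a lift of `g P` has order exactly one at
each `P`. A relation modulo `p` between the powers of `η` is then divisible by `∏ (g P) ^ e(P)`,
which has degree `n`, so `1, η, …, η ^ (n - 1)` are independent modulo `p` and `p` does not divide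
the index of `ℤ[η]`. As `n < 2 * p`, enough irreducible polynomials of every degree `f > 1` can be
found among the translates `g(x + c)` of a single one, and the only possible obstruction is to have
more than `p` primes with `f(P) = 1`.

The primes with `f(P) = 1` give linear factors of the characteristic polynomial of a root of
`x ^ n + a * x + b` modulo `p`. If `p` does not divide both `a` and `b`, this polynomial has at most
`p` roots in `𝔽_p`, counted with multiplicity. Otherwise, divide the root by powers of `p` until
`p ^ (n - 1) ∣ a` and `p ^ n ∣ b` do not both hold. At an unramified `P` the order of the root is
then `v(b) - v(a)`, by the Newton polygon, and the norm of the root leaves room for only one such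
`P`. Since `∑ e(P) * f(P) = n`, there are at most `(n + 1) / 2 ≤ p` primes above `p`.
-/

open Polynomial NumberField

section FiniteField

theorem le_natCard_of_charP (R : Type*) [Ring R] [Finite R] (p : ℕ) [CharP R p] :
    p ≤ Nat.card R := by
  have := Fintype.ofFinite R
  refine Nat.le_of_dvd Nat.card_pos ((CharP.cast_eq_zero_iff R p _).mp ?_)
  rw [Nat.card_eq_fintype_card, Nat.cast_card_eq_zero]

theorem exists_aeval_eq_zero_of_natDegree_dvd_finrank {F L : Type*} [Field F] [Field L]
    [Algebra F L] [Finite L] {g : F[X]} (hg : Irreducible g)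
    (hdeg : g.natDegree ∣ Module.finrank F L) : ∃ x : L, aeval x g = 0 := by
  have : Fact (Irreducible g) := ⟨hg⟩
  have hfinrank : Module.finrank F (AdjoinRoot g) = g.natDegree := by
    rw [(AdjoinRoot.powerBasis hg.ne_zero).finrank, AdjoinRoot.powerBasis_dim]
  have : Module.Finite F (AdjoinRoot g) := (AdjoinRoot.powerBasis hg.ne_zero).finite
  obtain ⟨φ⟩ := FiniteField.nonempty_algHom_of_finrank_dvd (hfinrank ▸ hdeg)
  exact ⟨φ (AdjoinRoot.root g), by rw [aeval_algHom_apply, AdjoinRoot.aeval_eq,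
    AdjoinRoot.mk_self, map_zero]⟩

variable (F : Type*) [Field F] [Finite F]

theorem exists_monic_irreducible_natDegree_eq {d : ℕ} (hd : d ≠ 0) :
    ∃ g : F[X], g.Monic ∧ Irreducible g ∧ g.natDegree = d := by
  obtain ⟨q, _⟩ := CharP.exists F
  have : Fact q.Prime := ⟨CharP.char_is_prime F q⟩
  have : NeZero d := ⟨hd⟩
  obtain ⟨α, hα⟩ := Field.exists_primitive_element F (FiniteField.Extension F q d)
  have hint : IsIntegral F α := .of_finite F α
  exact ⟨minpoly F α, minpoly.monic hint, minpoly.irreducible hint, by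
    rw [(Field.primitive_element_iff_minpoly_natDegree_eq F α).mp hα,
      FiniteField.finrank_extension]⟩

variable {F}

theorem taylor_left_injective {R : Type*} [CommRing R] [IsDomain R] {g : R[X]}
    (hg : (g.natDegree : R) ≠ 0) : Function.Injective fun c ↦ taylor c g := by
  obtain ⟨d, hd⟩ : ∃ d, g.natDegree = d + 1 :=
    Nat.exists_eq_succ_of_ne_zero fun h ↦ hg (by rw [h, Nat.cast_zero])
  have hdeg : (hasseDeriv d g).natDegree < 2 := by
    have := natDegree_hasseDeriv_le g d
    omega
  have hcoeff (c : R) :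
      (taylor c g).coeff d = g.coeff d + g.natDegree * g.leadingCoeff * c := by
    rw [taylor_coeff, eval_eq_sum_range' hdeg, Finset.sum_range_succ, Finset.sum_range_one,
      hasseDeriv_coeff, hasseDeriv_coeff, leadingCoeff, hd, zero_add, add_comm 1 d,
      Nat.choose_self, Nat.choose_succ_self_right]
    simp
  have hlead : g.leadingCoeff ≠ 0 := leadingCoeff_ne_zero.mpr fun h ↦ hg (by simp [h])
  intro c c' h
  have := congrArg (coeff · d) h
  simpa [hcoeff, hg, hlead] using this

theorem exists_injective_irreducible_natDegree_eq {ι : Type*} [Finite ι] {f : ι → ℕ}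
    (hf : ∀ i, f i ≠ 0) (hcard : ∀ d, {i | f i = d}.ncard ≤ Nat.card F)
    (hcast : ∀ i j, i ≠ j → f i = f j → (f i : F) ≠ 0) :
    ∃ g : ι → F[X], Function.Injective g ∧
      ∀ i, (g i).Monic ∧ Irreducible (g i) ∧ (g i).natDegree = f i := by
  choose! h hmonic hirr hdeg using
    fun d (hd : d ≠ 0) ↦ exists_monic_irreducible_natDegree_eq F hd
  have hinj (d : ℕ) : ∃ c : ι → F, Set.InjOn c {i | f i = d} := by
    obtain ⟨c, -, hc⟩ := (Set.toFinite {i | f i = d}).exists_injOn_of_encard_le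
      (t := (Set.univ : Set F)) (by
        rw [← (Set.toFinite _).cast_ncard_eq, ← (Set.toFinite _).cast_ncard_eq, Set.ncard_univ]
        exact_mod_cast hcard d)
    exact ⟨c, hc⟩
  choose c hc using hinj
  refine ⟨fun i ↦ taylor (c (f i) i) (h (f i)), fun i j hij ↦ ?_, fun i ↦ ⟨?_, ?_, ?_⟩⟩
  · have hfij : f i = f j := by
      simpa [hdeg _ (hf _)] using congrArg natDegree hij
    by_contra hne
    refine hne (hc (f i) rfl hfij.symm (taylor_left_injective (g := h (f i)) ?_ ?_))
    · rw [hdeg _ (hf i)]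
      exact hcast i j hne hfij
    · simpa only [← hfij] using hij
  · rw [Monic, leadingCoeff_taylor]
    exact hmonic _ (hf i)
  · exact (MulEquiv.irreducible_iff (taylorEquiv (c (f i) i))).mpr (hirr _ (hf i))
  · rw [natDegree_taylor, hdeg _ (hf i)]

theorem mul_ncard_eq_le_sum {ι : Type*} [Fintype ι] (f : ι → ℕ) (d : ℕ) :
    d * {i | f i = d}.ncard ≤ ∑ i, f i := by
  rw [Set.ncard_eq_toFinset_card', Set.toFinset_ofPred, mul_comm, ← smul_eq_mul]
  exact (Finset.card_nsmul_le_sum _ _ _ fun i hi ↦ (Finset.mem_filter.mp hi).2.ge).trans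
    (Finset.sum_le_univ_sum_of_nonneg fun _ ↦ zero_le)

theorem exists_injective_irreducible_natDegree_eq_of_sum_lt {p : ℕ} [CharP F p] {ι : Type*}
    [Fintype ι] {f : ι → ℕ} (hf : ∀ i, f i ≠ 0) (hone : {i | f i = 1}.ncard ≤ Nat.card F)
    (hsum : ∑ i, f i < 2 * p) :
    ∃ g : ι → F[X], Function.Injective g ∧
      ∀ i, (g i).Monic ∧ Irreducible (g i) ∧ (g i).natDegree = f i := by
  refine exists_injective_irreducible_natDegree_eq hf (fun d ↦ ?_) fun i j hij hfij hcast ↦ ?_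
  · obtain rfl | rfl | hd : d = 0 ∨ d = 1 ∨ 2 ≤ d := by omega
    · simp [hf]
    · exact hone
    · have := mul_ncard_eq_le_sum f d
      have := le_natCard_of_charP F p
      nlinarith
  · have htwo : 1 < {k | f k = f i}.ncard :=
      (Set.one_lt_ncard (Set.toFinite _)).mpr ⟨i, rfl, j, hfij.symm, hij⟩
    have hle := Nat.le_of_dvd (Nat.pos_of_ne_zero (hf i)) ((CharP.cast_eq_zero_iff F p _).mp hcast)
    have := mul_ncard_eq_le_sum f (f i)
    nlinarith

end FiniteField

section Trinomial

theorem natDegree_trinomial_eq {R : Type*} [Semiring R] [Nontrivial R] {n : ℕ} (hn : 1 < n)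
    (a b : R) : (X ^ n + C a * X + C b).natDegree = n := by
  rw [add_assoc, natDegree_add_eq_left_of_natDegree_lt, natDegree_X_pow]
  exact natDegree_linear_le.trans_lt (by rwa [natDegree_X_pow])

theorem monic_trinomial {R : Type*} [Semiring R] {n : ℕ} (hn : 1 < n) (a b : R) :
    (X ^ n + C a * X + C b).Monic := by
  rw [add_assoc]
  exact monic_X_pow_add (degree_linear_le.trans_lt (by exact_mod_cast hn))

variable {F : Type*} [Field F] {n : ℕ} {a b z : F}

theorem eq_div_of_one_lt_rootMultiplicity_trinomial (hn : (n : F) ≠ 0) (hn' : (n : F) ≠ 1)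
    (hab : ¬ (a = 0 ∧ b = 0)) (hz : 1 < (X ^ n + C a * X + C b).rootMultiplicity z) :
    z ≠ 0 ∧ z = n * b / ((1 - n) * a) := by
  have hT : X ^ n + C a * X + C b ≠ 0 := fun h ↦ by simp [h] at hz
  have hn2 : 2 ≤ n := by
    by_contra! h
    interval_cases n <;> simp at hn hn'
  obtain ⟨hroot, hderiv⟩ := (one_lt_rootMultiplicity_iff_isRoot hT).mp hz
  simp only [IsRoot, eval_add, eval_pow, eval_X, eval_mul, eval_C, derivative_add,
    derivative_X_pow, derivative_C_mul, derivative_X, derivative_C,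
    mul_one, add_zero] at hroot hderiv
  have hz0 : z ≠ 0 := by
    rintro rfl
    simp_all [show n ≠ 0 by omega, show n - 1 ≠ 0 by omega]
  have ha : a ≠ 0 := by
    rintro rfl
    simp_all
  refine ⟨hz0, ?_⟩
  rw [eq_div_iff (mul_ne_zero (sub_ne_zero.mpr hn'.symm) ha)]
  linear_combination z * hderiv - n * hroot - n * pow_sub_one_mul (show n ≠ 0 by omega) z

theorem rootMultiplicity_trinomial_le_two (hn : (n : F) ≠ 0) (hn' : (n : F) ≠ 1)
    (hab : ¬ (a = 0 ∧ b = 0)) : (X ^ n + C a * X + C b).rootMultiplicity z ≤ 2 := by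
  by_contra! hz
  have hz0 := (eq_div_of_one_lt_rootMultiplicity_trinomial hn hn' hab (one_lt_two.trans hz)).1
  have hn1 : 1 ≤ n := Nat.one_le_iff_ne_zero.mpr fun h ↦ hn (by simp [h])
  have := isRoot_iterate_derivative_of_lt_rootMultiplicity hz
  simp [derivative_X_pow, Nat.cast_sub hn1, sub_eq_zero, hn, hn', hz0] at this

theorem card_roots_trinomial_le [Finite F] (hn : (n : F) ≠ 0) (hn' : (n : F) ≠ 1)
    (hab : ¬ (a = 0 ∧ b = 0)) :
    (X ^ n + C a * X + C b).roots.card ≤ Nat.card F := by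
  classical
  have := Fintype.ofFinite F
  have card_le {s : Multiset F} (hs : s.Nodup) : s.card ≤ Nat.card F := by
    simpa using Finset.card_le_univ ⟨s, hs⟩
  set T := X ^ n + C a * X + C b with hT
  by_cases hnodup : T.roots.Nodup
  · exact card_le hnodup
  obtain ⟨z, hz⟩ : ∃ z, 1 < T.rootMultiplicity z := by
    simpa [Multiset.nodup_iff_count_le_one] using hnodup
  obtain ⟨hz0, hz_eq⟩ := eq_div_of_one_lt_rootMultiplicity_trinomial hn hn' hab hz
  have hb : b ≠ 0 := by
    rintro rfl
    simp_all
  have hmem : z ∈ T.roots := Multiset.count_pos.mp (by rw [count_roots]; omega)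
  -- The unique multiple root is a double root; `0`, which is not a root, can replace one copy.
  have hnodup' : (0 ::ₘ T.roots.erase z).Nodup := by
    refine Multiset.nodup_cons.mpr ⟨fun h ↦ ?_, Multiset.nodup_iff_count_le_one.mpr fun w ↦ ?_⟩
    · have := isRoot_of_mem_roots (Multiset.mem_of_mem_erase h)
      have hn0 : n ≠ 0 := fun h ↦ hn (by simp [h])
      simp [hT, hn0, hb] at this
    · by_cases hw : w = z
      · rw [hw, Multiset.count_erase_self, count_roots]
        have : T.rootMultiplicity z ≤ 2 := rootMultiplicity_trinomial_le_two hn hn' hab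
        omega
      · rw [Multiset.count_erase_of_ne hw, count_roots]
        by_contra! h
        exact hw ((eq_div_of_one_lt_rootMultiplicity_trinomial hn hn' hab h).2.trans hz_eq.symm)
  simpa [Multiset.card_cons, Multiset.card_erase_add_one hmem] using card_le hnodup'

end Trinomial

section Charpoly

theorem charpoly_dvd_of_comp_eq {F V W : Type*} [Field F] [AddCommGroup V] [Module F V]
    [Module.Finite F V] [AddCommGroup W] [Module F W] [Module.Finite F W] {π : V →ₗ[F] W}
    (hπ : Function.Surjective π) {f : Module.End F V} {g : Module.End F W}
    (hfg : π ∘ₗ f = g ∘ₗ π) : g.charpoly ∣ f.charpoly := by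
  let e := π.quotKerEquivOfSurjective hπ
  let c := Module.finBasis F W
  let b := (Module.finBasis F π.ker).sumQuot (c.map e.symm)
  have hb (j) : π (b (.inr j)) = c j := by
    rw [← π.quotKerEquivOfSurjective_apply_mk hπ, Module.Basis.sumQuot_inr, Module.Basis.map_apply]
    exact e.apply_symm_apply (c j)
  have hrepr (v i) : b.repr v (.inr i) = c.repr (π v) i := by
    rw [Module.Basis.sumQuot_repr_inr]
    simp [e]
  have h₂₁ : (LinearMap.toMatrix b b f).toBlocks₂₁ = 0 := by
    ext i j
    rw [Matrix.toBlocks₂₁, Matrix.of_apply, LinearMap.toMatrix_apply, hrepr,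
      ← LinearMap.comp_apply, hfg, LinearMap.comp_apply, Module.Basis.sumQuot_inl,
      LinearMap.map_coe_ker]
    simp
  have h₂₂ : (LinearMap.toMatrix b b f).toBlocks₂₂ = LinearMap.toMatrix c c g := by
    ext i j
    rw [Matrix.toBlocks₂₂, Matrix.of_apply, LinearMap.toMatrix_apply, hrepr,
      ← LinearMap.comp_apply, hfg, LinearMap.comp_apply, hb, LinearMap.toMatrix_apply]
  rw [← LinearMap.charpoly_toMatrix f b, ← Matrix.fromBlocks_toBlocks (LinearMap.toMatrix b b f),
    h₂₁, Matrix.charpoly_fromBlocks_zero₂₁, h₂₂, LinearMap.charpoly_toMatrix]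
  exact dvd_mul_left _ _

theorem pi_algHom_surjective {F A ι : Type*} [Field F] [CommRing A] [Algebra F A] [Finite ι]
    {φ : ι → A →ₐ[F] F} (hφ : Function.Injective φ) :
    Function.Surjective (AlgHom.pi φ) := by
  have hmax (i) : (RingHom.ker (φ i)).IsMaximal :=
    RingHom.ker_isMaximal_of_surjective _ fun y ↦ ⟨algebraMap F A y, (φ i).commutes y⟩
  have hker (i) (x : A) : algebraMap F A (φ i x) - x ∈ RingHom.ker (φ i) := by
    rw [RingHom.mem_ker, map_sub, (φ i).commutes]
    exact sub_self _
  have hcoprime : Pairwise fun i j ↦ IsCoprime (RingHom.ker (φ i)) (RingHom.ker (φ j)) :=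
    fun i j hij ↦ Ideal.isCoprime_of_isMaximal fun h ↦ hij <| hφ <| AlgHom.ext fun x ↦ by
      have := h ▸ hker i x
      rwa [RingHom.mem_ker, map_sub, (φ j).commutes, sub_eq_zero] at this
  intro y
  obtain ⟨x, hx⟩ := Ideal.exists_forall_sub_mem_ideal hcoprime fun i ↦ algebraMap F A (y i)
  refine ⟨x, funext fun i ↦ ?_⟩
  have := hx i
  rwa [RingHom.mem_ker, map_sub, (φ i).commutes, sub_eq_zero] at this

theorem prod_X_sub_C_dvd_charpoly_lmul {k R S ι : Type*} [CommRing R] [Field k] [Algebra R k]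
    [CommRing S] [Algebra R S] [Module.Free R S] [Module.Finite R S] [Fintype ι]
    {φ : ι → S →ₐ[R] k} (hφ : Function.Injective φ) (θ : S) :
    ∏ i, (X - C (φ i θ)) ∣ (Algebra.lmul R S θ).charpoly.map (algebraMap R k) := by
  classical
  let ψ : ι → TensorProduct R k S →ₐ[k] k := fun i ↦
    Algebra.TensorProduct.lift (Algebra.ofId k k) (φ i) fun _ _ ↦ .all _ _
  have hψ (i) (s : S) : ψ i (1 ⊗ₜ s) = φ i s := by simp [ψ]
  have hψinj : Function.Injective ψ := fun i j hij ↦ hφ <| AlgHom.ext fun s ↦ by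
    rw [← hψ, hij, hψ]
  rw [← LinearMap.charpoly_baseChange, ← Matrix.charpoly_diagonal, ← Matrix.charpoly_toLin']
  refine charpoly_dvd_of_comp_eq (π := (AlgHom.pi ψ).toLinearMap) (pi_algHom_surjective hψinj) ?_
  ext s i
  simp [hψ, Matrix.mulVec_diagonal]

end Charpoly

section PrimesOver

variable {R S : Type*} [CommRing R] [CommRing S] [Algebra R S] (𝔭 : Ideal R) [𝔭.IsMaximal]

attribute [local instance] Ideal.Quotient.field

theorem exists_algHom_ker_eq_of_inertiaDeg_eq_one (P : Ideal S) [P.LiesOver 𝔭] [P.IsMaximal]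
    (hP : P.inertiaDeg R = 1) : ∃ φ : S →ₐ[R] R ⧸ 𝔭, RingHom.ker φ = P := by
  rw [Ideal.inertiaDeg_eq_of_isMaximal 𝔭 P] at hP
  let e : (R ⧸ 𝔭) ≃ₐ[R ⧸ 𝔭] S ⧸ P := .ofBijective (Algebra.ofId _ _) <|
    Algebra.finrank_eq_one_iff_bijective_algebraMap.mp hP
  refine ⟨(e.symm.toAlgHom.restrictScalars R).comp (Ideal.Quotient.mkₐ R P), ?_⟩
  ext x
  simp [RingHom.mem_ker, Ideal.Quotient.eq_zero_iff_mem]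

theorem ncard_inertiaDeg_eq_one_le_card_roots_charpoly [Module.Free R S] [Module.Finite R S]
    (θ : S) : {P : 𝔭.primesOver S | P.1.inertiaDeg R = 1}.ncard ≤
      ((Algebra.lmul R S θ).charpoly.map (Ideal.Quotient.mk 𝔭)).roots.card := by
  have : Finite (𝔭.primesOver S) := Algebra.QuasiFinite.finite_primesOver 𝔭
  have := Fintype.ofFinite {P : 𝔭.primesOver S | P.1.inertiaDeg R = 1}
  have hmax (P : 𝔭.primesOver S) : P.1.IsMaximal := inferInstance
  choose φ hφ using fun P : {P : 𝔭.primesOver S | P.1.inertiaDeg R = 1} ↦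
    exists_algHom_ker_eq_of_inertiaDeg_eq_one 𝔭 P.1.1 P.2
  have hφinj : Function.Injective φ := fun P Q hPQ ↦
    Subtype.ext (Subtype.ext (by rw [← hφ, hPQ, hφ]))
  have hne := ((LinearMap.charpoly_monic (Algebra.lmul R S θ)).map (Ideal.Quotient.mk 𝔭)).ne_zero
  have := Multiset.card_le_card (roots.le_of_dvd hne (prod_X_sub_C_dvd_charpoly_lmul hφinj θ))
  rw [roots_prod _ _ (Finset.prod_ne_zero_iff.mpr fun _ _ ↦ X_sub_C_ne_zero _)] at this
  simp only [roots_X_sub_C, Multiset.bind_singleton, Multiset.card_map] at this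
  rwa [← Nat.card_coe_set_eq, Nat.card_eq_fintype_card]

theorem two_mul_card_primesOver_le {R S : Type*} [CommRing R] [IsDomain R] [CommRing S]
    [Algebra R S] [Module.Finite R S] [Module.Flat R S] (𝔭 : Ideal R) [𝔭.IsPrime] :
    2 * Nat.card (𝔭.primesOver S) ≤
      Module.finrank R S + {P : 𝔭.primesOver S | P.1.ramificationIdx R = 1}.ncard := by
  have : Finite (𝔭.primesOver S) := Algebra.QuasiFinite.finite_primesOver 𝔭
  have := Fintype.ofFinite (𝔭.primesOver S)
  rw [← Ideal.sum_ramification_inertia_eq_finrank 𝔭 S, Set.ncard_eq_toFinset_card',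
    Set.toFinset_ofPred, Finset.card_filter, ← Finset.sum_add_distrib, mul_comm,
    Nat.card_eq_fintype_card, ← smul_eq_mul]
  refine Finset.card_nsmul_le_sum _ _ _ fun P _ ↦ ?_
  have he := Ideal.ramificationIdx_pos P.1 R
  have hf := Ideal.inertiaDeg_pos P.1 R
  split_ifs with h
  · rw [h]
    omega
  · have : 2 ≤ P.1.ramificationIdx R := by omega
    nlinarith

end PrimesOver

section CharpolyTrinomial

variable {R S : Type*} [CommRing R] [CommRing S] [Algebra R S] [Module.Free R S]
  [Module.Finite R S] {n : ℕ} {a b : R} {θ : S}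

theorem finrank_eq_of_charpoly_lmul_eq [Nontrivial R] (hn : 1 < n)
    (hθ : (Algebra.lmul R S θ).charpoly = X ^ n + C a * X + C b) : Module.finrank R S = n := by
  rw [← LinearMap.charpoly_natDegree (Algebra.lmul R S θ), hθ, natDegree_trinomial_eq hn]

theorem pow_add_mul_add_eq_zero_of_charpoly_lmul_eq
    (hθ : (Algebra.lmul R S θ).charpoly = X ^ n + C a * X + C b) :
    θ ^ n + algebraMap R S a * θ + algebraMap R S b = 0 := by
  have h := Algebra.aeval_self_charpoly_lmul (R := R) θ
  rw [hθ] at h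
  simpa using h

theorem associated_norm_of_charpoly_lmul_eq (hn : n ≠ 0)
    (hθ : (Algebra.lmul R S θ).charpoly = X ^ n + C a * X + C b) :
    Associated (Algebra.norm R θ) b := by
  have h := LinearMap.det_eq_sign_charpoly_coeff (Algebra.lmul R S θ)
  simp only [hθ, coeff_add, coeff_X_pow, hn.symm, if_false, coeff_C_mul, coeff_X_zero, mul_zero,
    coeff_C_zero, zero_add] at h
  change Associated (LinearMap.det (Algebra.lmul R S θ)) b
  rw [h]
  exact associated_unit_mul_left b _ (isUnit_one.neg.pow _)

theorem charpoly_lmul_eq_of_natDegree_minpoly {R S : Type*} [CommRing R] [IsDomain R]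
    [IsIntegrallyClosed R] [CommRing S] [IsDomain S] [Algebra R S] [Module.Free R S]
    [Module.Finite R S] {η : S} (hη : (minpoly R η).natDegree = Module.finrank R S)
    {f : R[X]} (hf : f.Monic) (hdeg : f.natDegree = Module.finrank R S) (hroot : aeval η f = 0) :
    (Algebra.lmul R S η).charpoly = f := by
  have hint : IsIntegral R η := Algebra.IsIntegral.isIntegral η
  have heq {g : R[X]} (hg : g.Monic) (hgdeg : g.natDegree = Module.finrank R S)
      (hgroot : aeval η g = 0) : g = minpoly R η :=
    eq_of_monic_of_dvd_of_natDegree_le (minpoly.monic hint) hg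
      (minpoly.isIntegrallyClosed_dvd hint hgroot) (hgdeg.trans hη.symm).le
  rw [heq hf hdeg hroot]
  exact heq (LinearMap.charpoly_monic _) (LinearMap.charpoly_natDegree _)
    (Algebra.aeval_self_charpoly_lmul η)

end CharpolyTrinomial

section Ord

variable {S : Type*} [CommRing S] [IsDedekindDomain S]

/-- The order of vanishing of `x` at the prime ideal `P`, as an additive valuation with
`ord P 0 = ⊤`. -/
noncomputable def ord (P : Ideal S) (x : S) : ℕ∞ := emultiplicity P (Ideal.span {x})

variable {P : Ideal S} {x y : S} {k : ℕ}

theorem natCast_le_ord : k ≤ ord P x ↔ x ∈ P ^ k := by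
  rw [ord, ← pow_dvd_iff_le_emultiplicity, Ideal.dvd_span_singleton]

theorem one_le_ord : 1 ≤ ord P x ↔ x ∈ P := by
  simpa using natCast_le_ord (P := P) (x := x) (k := 1)

theorem ord_eq_one : ord P x = 1 ↔ x ∈ P ∧ x ∉ P ^ 2 := by
  rw [← one_le_ord, ← natCast_le_ord, not_le, Nat.cast_ofNat, ← one_add_one_eq_two,
    ENat.lt_add_one_iff ENat.one_ne_top, and_comm, le_antisymm_iff]

theorem ord_mul [P.IsPrime] (hP : P ≠ ⊥) (x y : S) : ord P (x * y) = ord P x + ord P y := by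
  rw [ord, ← Ideal.span_singleton_mul_span_singleton,
    emultiplicity_mul (Ideal.prime_of_isPrime hP ‹_›), ord, ord]

theorem ord_pow [P.IsPrime] (hP : P ≠ ⊥) (x : S) (k : ℕ) : ord P (x ^ k) = k * ord P x := by
  rw [ord, ← Ideal.span_singleton_pow, emultiplicity_pow (Ideal.prime_of_isPrime hP ‹_›), ord]

theorem exists_ord_eq_one [P.IsPrime] (hP : P ≠ ⊥) : ∃ x, ord P x = 1 := by
  obtain ⟨x, hx⟩ := SetLike.exists_of_lt (pow_one P ▸ Ideal.pow_succ_lt_pow hP 1)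
  exact ⟨x, ord_eq_one.mpr hx⟩

theorem ord_ne_top [P.IsPrime] (hP : P ≠ ⊥) (hx : x ≠ 0) : ord P x ≠ ⊤ :=
  finiteMultiplicity_iff_emultiplicity_ne_top.mp <|
    FiniteMultiplicity.of_prime_left (Ideal.prime_of_isPrime hP ‹_›) (by simpa using hx)

theorem min_ord_le_ord_of_add_eq_zero {z : S} (h : x + y + z = 0) :
    min (ord P x) (ord P y) ≤ ord P z := by
  refine ENat.forall_natCast_le_iff_le.mp fun k hk ↦ ?_
  rw [le_min_iff, natCast_le_ord, natCast_le_ord] at hk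
  rw [natCast_le_ord, ← neg_eq_of_add_eq_zero_right h, neg_mem_iff]
  exact Ideal.add_mem _ hk.1 hk.2

end Ord

theorem adjoin_rat_eq_top_iff_natDegree_minpoly {K : Type*} [Field K] [NumberField K] {η : 𝓞 K} :
    Algebra.adjoin ℚ {(η : K)} = ⊤ ↔ (minpoly ℤ η).natDegree = Module.finrank ℤ (𝓞 K) := by
  have hint := RingOfIntegers.isIntegral η
  rw [← IntermediateField.adjoin_simple_eq_top_iff_of_isAlgebraic (.of_finite ℚ _),
    Field.primitive_element_iff_minpoly_natDegree_eq, RingOfIntegers.rank,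
    minpoly.isIntegrallyClosed_eq_field_fractions ℚ K hint, (minpoly.monic hint).natDegree_map]

/-- The powers `1, η, …, η ^ (n - 1)`, where `n` is the rank of `S` over `R`, are linearly
independent over `R ⧸ 𝔭` in `S ⧸ 𝔭 S`. Relations are encoded as polynomials over `R`. -/
def LinearIndependentPowersMod {R S : Type*} [CommRing R] [CommRing S] [Algebra R S]
    (𝔭 : Ideal R) (η : S) : Prop :=
  ∀ H : R[X], H.degree < Module.finrank R S → aeval η H ∈ 𝔭.map (algebraMap R S) →
    H.map (Ideal.Quotient.mk 𝔭) = 0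

namespace LinearIndependentPowersMod

theorem natDegree_minpoly {R S : Type*} [CommRing R] [IsDomain R] [IsIntegrallyClosed R]
    [CommRing S] [IsDomain S] [Algebra R S] [Module.Finite R S] [Module.IsTorsionFree R S]
    {𝔭 : Ideal R} {η : S} (h𝔭 : 𝔭 ≠ ⊤) (hη : LinearIndependentPowersMod 𝔭 η) :
    (minpoly R η).natDegree = Module.finrank R S := by
  have hint : IsIntegral R η := Algebra.IsIntegral.isIntegral η
  refine le_antisymm ?_ ?_
  · rw [← Algebra.adjoin.powerBasis'_dim hint, ← (Algebra.adjoin.powerBasis' hint).finrank]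
    exact Submodule.finrank_le (Algebra.adjoin R {η}).toSubmodule
  · by_contra! hlt
    have : Nontrivial (R ⧸ 𝔭) := Ideal.Quotient.nontrivial_iff.mpr h𝔭
    refine ((minpoly.monic hint).map (Ideal.Quotient.mk 𝔭)).ne_zero (hη _ ?_ (by simp))
    rw [degree_eq_natDegree (minpoly.ne_zero hint)]
    exact_mod_cast hlt

theorem adjoin_eq_top {K : Type*} [Field K] [NumberField K] {𝔭 : Ideal ℤ} {η : 𝓞 K}
    (h𝔭 : 𝔭 ≠ ⊤) (hη : LinearIndependentPowersMod 𝔭 η) :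
    Algebra.adjoin ℚ {(η : K)} = ⊤ :=
  adjoin_rat_eq_top_iff_natDegree_minpoly.mpr (hη.natDegree_minpoly h𝔭)

variable {S : Type*} [CommRing S] [IsDomain S] [Module.Free ℤ S] [Module.Finite ℤ S] {η : S}

theorem exists_degree_lt_aeval_eq {𝔭 : Ideal ℤ} (h𝔭 : 𝔭 ≠ ⊤)
    (hη : LinearIndependentPowersMod 𝔭 η) {x : S} (hx : x ∈ Algebra.adjoin ℤ {η}) :
    ∃ H : ℤ[X], H.degree < Module.finrank ℤ S ∧ aeval η H = x := by
  have hint : IsIntegral ℤ η := Algebra.IsIntegral.isIntegral η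
  rw [Algebra.adjoin_singleton_eq_range_aeval] at hx
  obtain ⟨H, rfl⟩ := hx
  refine ⟨H %ₘ minpoly ℤ η, ?_, aeval_modByMonic_eq_self_of_root (minpoly.aeval ℤ η)⟩
  rw [← hη.natDegree_minpoly h𝔭, ← degree_eq_natDegree (minpoly.ne_zero hint)]
  exact degree_modByMonic_lt H (minpoly.monic hint)

theorem mem_adjoin_of_smul_mem {m : ℤ} (hm : ¬ IsUnit m) (hm0 : m ≠ 0)
    (hη : LinearIndependentPowersMod (Ideal.span {m}) η) {x : S}
    (hx : m • x ∈ Algebra.adjoin ℤ {η}) : x ∈ Algebra.adjoin ℤ {η} := by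
  obtain ⟨H, hdeg, hH⟩ :=
    hη.exists_degree_lt_aeval_eq (Ideal.span_singleton_eq_top.not.mpr hm) hx
  obtain ⟨H', rfl⟩ : C m ∣ H := by
    have hmap := hη H hdeg <| by
      rw [hH, Ideal.map_span, Set.image_singleton, Ideal.mem_span_singleton]
      exact ⟨x, by simp⟩
    refine (C_dvd_iff_dvd_coeff _ _).mpr fun i ↦ ?_
    rw [← Ideal.mem_span_singleton, ← Ideal.Quotient.eq_zero_iff_mem, ← coeff_map, hmap, coeff_zero]
  rw [map_mul, aeval_C, ← Algebra.smul_def] at hH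
  exact smul_right_injective S hm0 hH ▸ aeval_mem_adjoin_singleton ℤ η

theorem not_dvd_index {p : ℕ} (hp : p.Prime)
    (hη : LinearIndependentPowersMod (Ideal.span {(p : ℤ)}) η) :
    ¬ p ∣ (Algebra.adjoin ℤ {η}).toSubring.toAddSubgroup.index := by
  have hunit : ¬ IsUnit (p : ℤ) := (Nat.prime_iff_prime_int.mp hp).not_isUnit
  have hrank := hη.natDegree_minpoly (Ideal.span_singleton_eq_top.not.mpr hunit)
  set A := Algebra.adjoin ℤ {η}
  have : Finite (S ⧸ A.toSubring.toAddSubgroup) := by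
    refine Submodule.finiteQuotientOfFreeOfRankEq A.toSubmodule ?_
    rw [← hrank, ← Algebra.adjoin.powerBasis'_dim (Algebra.IsIntegral.isIntegral η),
      ← PowerBasis.finrank]
    rfl
  intro hdvd
  have : Fact p.Prime := ⟨hp⟩
  obtain ⟨y, hy⟩ := exists_prime_addOrderOf_dvd_card' p hdvd
  obtain ⟨x, rfl⟩ := QuotientAddGroup.mk_surjective y
  have hpx : (p : ℤ) • x ∈ A := by
    rw [natCast_zsmul]
    exact (QuotientAddGroup.eq_zero_iff _).mp (hy ▸ addOrderOf_nsmul_eq_zero _)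
  refine hp.ne_one ?_
  rw [← hy, AddMonoid.addOrderOf_eq_one_iff]
  exact (QuotientAddGroup.eq_zero_iff x).mpr
    (hη.mem_adjoin_of_smul_mem hunit (Nat.cast_ne_zero.mpr hp.ne_zero) hpx)

end LinearIndependentPowersMod

section LiesOver

variable {R S : Type*} [CommRing R] [CommRing S] [Algebra R S] (𝔭 : Ideal R) {η : S} {G H : R[X]}

theorem aeval_mem_map_of_map_mk_eq_zero (hH : H.map (Ideal.Quotient.mk 𝔭) = 0) :
    aeval η H ∈ 𝔭.map (algebraMap R S) := by
  rw [aeval_eq_sum_range]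
  refine Ideal.sum_mem _ fun i _ ↦ ?_
  rw [Algebra.smul_def]
  refine Ideal.mul_mem_right _ _ (Ideal.mem_map_of_mem _ (Ideal.Quotient.eq_zero_iff_mem.mp ?_))
  rw [← coeff_map, hH, coeff_zero]

variable {P : Ideal S} [P.LiesOver 𝔭]

theorem mk_aeval_eq_aeval_map_mk : Ideal.Quotient.mk P (aeval η H) =
    aeval (Ideal.Quotient.mk P η) (H.map (Ideal.Quotient.mk 𝔭)) := by
  rw [aeval_def, aeval_def, eval₂_map, hom_eval₂]
  rfl

attribute [local instance] Ideal.Quotient.field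

variable [𝔭.IsMaximal]

theorem map_mk_dvd_map_mk_of_aeval_mem [P.IsPrime] (hG : Irreducible (G.map (Ideal.Quotient.mk 𝔭)))
    (hGη : aeval η G ∈ P) (hHη : aeval η H ∈ P) :
    G.map (Ideal.Quotient.mk 𝔭) ∣ H.map (Ideal.Quotient.mk 𝔭) := by
  by_contra hdvd
  obtain ⟨u, v, huv⟩ := (hG.coprime_iff_not_dvd).mpr hdvd
  have := congrArg (aeval (Ideal.Quotient.mk P η)) huv
  rw [map_add, map_mul, map_mul, ← mk_aeval_eq_aeval_map_mk, ← mk_aeval_eq_aeval_map_mk,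
    Ideal.Quotient.eq_zero_iff_mem.mpr hGη, Ideal.Quotient.eq_zero_iff_mem.mpr hHη] at this
  simp at this

variable [IsDedekindDomain S]

/- Since `𝔭 ⊆ P ^ e`, a congruence modulo `𝔭` between polynomials is a congruence modulo `P ^ e`
between their values, so the factors `G` of `H` can be split off one at a time. -/
theorem map_mk_pow_dvd_of_natCast_le_ord [P.IsPrime] (hP : P ≠ ⊥)
    (hG : Irreducible (G.map (Ideal.Quotient.mk 𝔭))) (hGη : ord P (aeval η G) = 1)
    {k : ℕ} (hk : 𝔭.map (algebraMap R S) ≤ P ^ k) (hH : k ≤ ord P (aeval η H)) :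
    G.map (Ideal.Quotient.mk 𝔭) ^ k ∣ H.map (Ideal.Quotient.mk 𝔭) := by
  induction k with
  | zero => simp
  | succ k ih =>
    obtain ⟨q, hq⟩ := ih (hk.trans (Ideal.pow_le_pow_right k.le_succ))
      (le_trans (by simp) hH)
    obtain ⟨M, rfl⟩ := map_surjective _ Ideal.Quotient.mk_surjective q
    have hrem : aeval η (H - G ^ k * M) ∈ P ^ (k + 1) :=
      hk (aeval_mem_map_of_map_mk_eq_zero 𝔭 (by simp [hq]))
    have hprod : aeval η G ^ k * aeval η M ∈ P ^ (k + 1) := by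
      have := Ideal.sub_mem _ (natCast_le_ord.mp hH) hrem
      simpa using this
    have hM : aeval η M ∈ P := by
      rw [← natCast_le_ord, ord_mul hP, ord_pow hP, hGη, mul_one, Nat.cast_add_one] at hprod
      rw [← one_le_ord]
      exact (ENat.add_le_add_iff_left (ENat.natCast_ne_top k)).mp hprod
    rw [hq, pow_succ]
    exact mul_dvd_mul_left _ (map_mk_dvd_map_mk_of_aeval_mem 𝔭 hG
      (one_le_ord.mp hGη.ge) hM)

theorem exists_ord_aeval_eq_one_of_derivative_notMem [P.IsPrime] (hP : P ≠ ⊥) {x : S}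
    (hx : aeval x G ∈ P) (hderiv : aeval x (derivative G) ∉ P) :
    ∃ y, ord P (aeval y G) = 1 := by
  by_cases hx2 : aeval x G ∈ P ^ 2
  swap
  · exact ⟨x, ord_eq_one.mpr ⟨hx, hx2⟩⟩
  obtain ⟨t, ht⟩ := exists_ord_eq_one hP
  have hlin : ord P (aeval x (derivative G) * t) = 1 := by
    rw [ord_mul hP, ht, Order.lt_one_iff.mp (lt_of_not_ge (one_le_ord.not.mpr hderiv)), zero_add]
  obtain ⟨c, hc⟩ := exists_mul_sq_add_linear_part_eq_eval_add (G.map (algebraMap R S)) x t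
  rw [derivative_map, eval_map_algebraMap, eval_map_algebraMap, eval_map_algebraMap] at hc
  have hsq : c * t ^ 2 ∈ P ^ 2 :=
    Ideal.mul_mem_left _ c (Ideal.pow_mem_pow (one_le_ord.mp ht.ge) 2)
  refine ⟨x + t, ?_⟩
  rw [← hc, ord_eq_one, Ideal.add_mem_iff_left _ hx2, Ideal.add_mem_iff_left _ hx,
    Ideal.add_mem_iff_right _ hsq, Ideal.add_mem_iff_right _ (Ideal.pow_le_self two_ne_zero hsq),
    ← ord_eq_one]
  exact hlin

theorem exists_ord_aeval_eq_one [Finite (R ⧸ 𝔭)] [P.IsMaximal] [Finite (S ⧸ P)] (hP : P ≠ ⊥)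
    (hG : Irreducible (G.map (Ideal.Quotient.mk 𝔭)))
    (hdeg : (G.map (Ideal.Quotient.mk 𝔭)).natDegree ∣ P.inertiaDeg R) :
    ∃ x, ord P (aeval x G) = 1 := by
  obtain ⟨z, hz⟩ := exists_aeval_eq_zero_of_natDegree_dvd_finrank (L := S ⧸ P) hG
    (Ideal.inertiaDeg_eq_of_isMaximal 𝔭 P ▸ hdeg)
  obtain ⟨x, rfl⟩ := Ideal.Quotient.mk_surjective z
  have hx : aeval x G ∈ P := by
    rwa [← Ideal.Quotient.eq_zero_iff_mem, mk_aeval_eq_aeval_map_mk 𝔭]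
  refine exists_ord_aeval_eq_one_of_derivative_notMem hP hx fun h ↦ ?_
  have hdvd := map_mk_dvd_map_mk_of_aeval_mem 𝔭 hG hx h
  rw [← derivative_map] at hdvd
  exact hG.not_isUnit ((PerfectField.separable_of_irreducible hG).isUnit_of_dvd' dvd_rfl hdvd)

theorem exists_forall_ord_aeval_eq_one {ι : Type*} [Finite ι] {P : ι → Ideal S}
    [∀ i, (P i).IsPrime] (hP : ∀ i, P i ≠ ⊥) (hinj : Function.Injective P)
    {G : ι → R[X]} (hG : ∀ i, ∃ x, ord (P i) (aeval x (G i)) = 1) :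
    ∃ η : S, ∀ i, ord (P i) (aeval η (G i)) = 1 := by
  have := Fintype.ofFinite ι
  choose x hx using hG
  obtain ⟨η, hη⟩ := IsDedekindDomain.exists_forall_sub_mem_ideal (s := Finset.univ) P
    (fun _ ↦ 2) (fun i _ ↦ Ideal.prime_of_isPrime (hP i) inferInstance)
    (fun i _ j _ hij ↦ hinj.ne hij) (fun i ↦ x i)
  refine ⟨η, fun i ↦ ?_⟩
  have hcongr : aeval η (G i) - aeval (x i) (G i) ∈ P i ^ 2 := by
    have := sub_dvd_eval_sub η (x i) ((G i).map (algebraMap R S))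
    rw [eval_map_algebraMap, eval_map_algebraMap] at this
    exact Ideal.mem_of_dvd _ this (hη i (Finset.mem_univ i))
  rw [← sub_add_cancel (aeval η (G i)) (aeval (x i) (G i)), ord_eq_one,
    Ideal.add_mem_iff_right _ hcongr,
    Ideal.add_mem_iff_right _ (Ideal.pow_le_self two_ne_zero hcongr), ← ord_eq_one]
  exact hx i

theorem exists_linearIndependentPowersMod [IsDomain R] [Module.Finite R S] [Module.Flat R S]
    [Finite (R ⧸ 𝔭)] (h𝔭 : 𝔭 ≠ ⊥) {g : 𝔭.primesOver S → (R ⧸ 𝔭)[X]}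
    (hinj : Function.Injective g)
    (hg : ∀ P, (g P).Monic ∧ Irreducible (g P) ∧ (g P).natDegree = P.1.inertiaDeg R) :
    ∃ η : S, LinearIndependentPowersMod 𝔭 η := by
  choose hmonic hirr hdeg using hg
  have hbot (P : 𝔭.primesOver S) : P.1 ≠ ⊥ :=
    Ideal.ne_bot_of_liesOver_of_ne_bot h𝔭 P.1
  have hmax (P : 𝔭.primesOver S) : P.1.IsMaximal := inferInstance
  choose G hG using fun P ↦ map_surjective _ (Ideal.Quotient.mk_surjective (I := 𝔭)) (g P)
  obtain ⟨η, hη⟩ := exists_forall_ord_aeval_eq_one hbot Subtype.val_injective fun P ↦ by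
    have : Finite (S ⧸ P.1) := Module.finite_of_finite (R ⧸ 𝔭)
    exact exists_ord_aeval_eq_one (P := P.1) 𝔭 (hbot P) (hG P ▸ hirr P) (by rw [hG, hdeg])
  refine ⟨η, fun H hHdeg hH ↦ ?_⟩
  have hdvd : ∏ P, g P ^ P.1.ramificationIdx R ∣ H.map (Ideal.Quotient.mk 𝔭) := by
    refine Finset.prod_dvd_of_coprime (fun P _ Q _ hPQ ↦ ?_) fun P _ ↦ ?_
    · refine IsCoprime.pow (((hirr P).coprime_iff_not_dvd).mpr fun h ↦ hinj.ne hPQ ?_)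
      exact eq_of_monic_of_associated (hmonic P) (hmonic Q)
        ((hirr P).associated_of_dvd (hirr Q) h)
    · have hle : 𝔭.map (algebraMap R S) ≤ P.1 ^ P.1.ramificationIdx R := by
        rw [← Ideal.dvd_iff_le, Ideal.IsDedekindDomain.ramificationIdx_eq_multiplicity 𝔭 P.1
          ((Ideal.map_eq_bot_iff_of_injective (FaithfulSMul.algebraMap_injective R S)).not.mpr h𝔭)]
        exact pow_multiplicity_dvd _ _
      rw [← hG]
      exact map_mk_pow_dvd_of_natCast_le_ord 𝔭 (hbot P) (hG P ▸ hirr P) (hη P) hle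
        (natCast_le_ord.mpr (hle hH))
  refine eq_zero_of_dvd_of_degree_lt hdvd (degree_map_le.trans_lt (hHdeg.trans_eq ?_))
  rw [degree_prod_of_monic _ _ fun P _ ↦ (hmonic P).pow _,
    ← Ideal.sum_ramification_inertia_eq_finrank 𝔭 S, Nat.cast_sum]
  refine Finset.sum_congr rfl fun P _ ↦ ?_
  rw [degree_pow, degree_eq_natDegree (hirr P).ne_zero, hdeg, Nat.cast_mul, nsmul_eq_mul]

end LiesOver

section OrdTrinomial

variable {R S : Type*} [CommRing R] [CommRing S] [Algebra R S] [IsDedekindDomain R]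
  [IsDedekindDomain S] (𝔭 : Ideal R) {P : Ideal S} [P.LiesOver 𝔭]

theorem ord_algebraMap [Module.Finite R S] [FaithfulSMul R S] [𝔭.IsPrime] [P.IsPrime]
    (h𝔭 : 𝔭 ≠ ⊥) (x : R) : ord P (algebraMap R S x) = P.ramificationIdx R * ord 𝔭 x := by
  have hP : P ≠ ⊥ := Ideal.ne_bot_of_liesOver_of_ne_bot h𝔭 P
  rcases eq_or_ne x 0 with rfl | hx
  · have := Ideal.ramificationIdx_pos P R
    simp [ord, this.ne']
  · rw [ord, ord, ← Set.image_singleton, ← Ideal.map_span,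
      Ideal.IsDedekindDomain.emultiplicity_map_eq_ramificationIdx'_mul (by simpa using hx)
        (Ideal.prime_of_isPrime h𝔭 ‹_›).irreducible (Ideal.prime_of_isPrime hP ‹_›).irreducible hP,
      Ideal.ramificationIdx'_eq_ramificationIdx 𝔭 P h𝔭]

theorem sum_inertiaDeg_mul_ord_le_ord_norm [Module.Free R S] [Module.Finite R S]
    [PerfectField (FractionRing R)] [Fintype (𝔭.primesOver S)] [𝔭.IsMaximal] (h𝔭 : 𝔭 ≠ ⊥) (x : S) :
    ∑ P : 𝔭.primesOver S, P.1.inertiaDeg R * ord P.1 x ≤ ord 𝔭 (Algebra.norm R x) := by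
  rcases eq_or_ne x 0 with rfl | hx
  · simp [ord, Algebra.norm_zero]
  have hmax (P : 𝔭.primesOver S) : P.1.IsMaximal := inferInstance
  have hbot (P : 𝔭.primesOver S) : P.1 ≠ ⊥ := Ideal.ne_bot_of_liesOver_of_ne_bot h𝔭 P.1
  choose w hw using fun P : 𝔭.primesOver S ↦ ENat.ne_top_iff_exists.mp (ord_ne_top (hbot P) hx)
  have hdvd : ∏ P : 𝔭.primesOver S, P.1 ^ w P ∣ Ideal.span {x} :=
    Finset.prod_dvd_of_coprime
      (fun P _ Q _ hPQ ↦ (Ideal.isCoprime_of_isMaximal (Subtype.val_injective.ne hPQ)).pow)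
      fun P _ ↦ Ideal.dvd_span_singleton.mpr (natCast_le_ord.mp (hw P).le)
  have hnorm := map_dvd (Ideal.relNorm R) hdvd
  simp only [map_prod, map_pow, Ideal.relNorm_eq_pow_of_isMaximal _ 𝔭, ← pow_mul,
    Finset.prod_pow_eq_pow_sum, Ideal.relNorm_singleton, Algebra.intNorm_eq_norm,
    Ideal.dvd_span_singleton, ← natCast_le_ord, Nat.cast_sum, Nat.cast_mul] at hnorm
  simpa only [hw] using hnorm

section Root

variable {n : ℕ} {a b : R} {θ : S} [Module.Finite R S] [FaithfulSMul R S] [𝔭.IsPrime] [P.IsPrime]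

theorem min_ord_trinomial_le (h𝔭 : 𝔭 ≠ ⊥)
    (hθ : θ ^ n + algebraMap R S a * θ + algebraMap R S b = 0) :
    min (P.ramificationIdx R * ord 𝔭 a + ord P θ) (P.ramificationIdx R * ord 𝔭 b) ≤
        n * ord P θ ∧
      min (n * ord P θ) (P.ramificationIdx R * ord 𝔭 b) ≤
        P.ramificationIdx R * ord 𝔭 a + ord P θ ∧
      min (n * ord P θ) (P.ramificationIdx R * ord 𝔭 a + ord P θ) ≤
        P.ramificationIdx R * ord 𝔭 b := by
  have hP : P ≠ ⊥ := Ideal.ne_bot_of_liesOver_of_ne_bot h𝔭 P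
  rw [← ord_pow hP, ← ord_algebraMap 𝔭 h𝔭, ← ord_algebraMap 𝔭 h𝔭, ← ord_mul hP]
  exact ⟨min_ord_le_ord_of_add_eq_zero (by linear_combination hθ),
    min_ord_le_ord_of_add_eq_zero (by linear_combination hθ),
    min_ord_le_ord_of_add_eq_zero hθ⟩

theorem ord_add_ord_eq_of_ramificationIdx_eq_one (h𝔭 : 𝔭 ≠ ⊥)
    (hθ : θ ^ (n + 1) + algebraMap R S a * θ + algebraMap R S b = 0) (hb0 : b ≠ 0)
    (ha : a ∈ 𝔭) (hb : b ∈ 𝔭) (hred : ¬ (a ∈ 𝔭 ^ n ∧ b ∈ 𝔭 ^ (n + 1)))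
    (he : P.ramificationIdx R = 1) :
    ord 𝔭 a + ord P θ = ord 𝔭 b ∧ ord 𝔭 b < (n + 1 : ℕ) * ord P θ := by
  have hθ0 : θ ≠ 0 := by
    rintro rfl
    simp [hb0] at hθ
  have hP : P ≠ ⊥ := Ideal.ne_bot_of_liesOver_of_ne_bot h𝔭 P
  obtain ⟨h₁, h₂, h₃⟩ := min_ord_trinomial_le 𝔭 (P := P) h𝔭 hθ
  simp only [he, Nat.cast_one, one_mul] at h₁ h₂ h₃
  rw [← natCast_le_ord, ← natCast_le_ord] at hred
  rw [← one_le_ord] at ha hb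
  have hβ := ord_ne_top h𝔭 hb0
  have hw := ord_ne_top hP hθ0
  generalize ord 𝔭 a = α, ord 𝔭 b = β, ord P θ = w at *
  lift β to ℕ using hβ
  lift w to ℕ using hw
  rw [min_le_iff] at h₁ h₂ h₃
  have hw₀ : w ≠ 0 := by
    rintro rfl
    rcases h₁ with h | h <;> simp_all
  have hnw : n ≤ n * w := Nat.le_mul_of_pos_right n (Nat.pos_of_ne_zero hw₀)
  cases α with
  | top =>
    simp only [top_add, le_top, true_and, top_le_iff, ENat.natCast_ne_top, or_false] at h₃ hred
    norm_cast at h₃ hred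
    rw [add_one_mul] at h₃
    omega
  | coe α =>
    norm_cast at *
    simp only [add_one_mul] at *
    omega

theorem ramificationIdx_mul_ord_le (h𝔭 : 𝔭 ≠ ⊥)
    (hθ : θ ^ (n + 1) + algebraMap R S a * θ + algebraMap R S b = 0) (hb0 : b ≠ 0)
    (hslope : (n + 1 : ℕ) * ord 𝔭 a < n * ord 𝔭 b) :
    P.ramificationIdx R * ord 𝔭 a ≤ n * ord P θ := by
  have hP : P ≠ ⊥ := Ideal.ne_bot_of_liesOver_of_ne_bot h𝔭 P
  have hθ0 : θ ≠ 0 := by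
    rintro rfl
    simp [hb0] at hθ
  have h₁ := (min_ord_trinomial_le 𝔭 (P := P) h𝔭 hθ).1
  have hα : ord 𝔭 a ≠ ⊤ := fun h ↦ by simp [h] at hslope
  have hβ := ord_ne_top h𝔭 hb0
  have hw := ord_ne_top hP hθ0
  generalize ord 𝔭 a = α, ord 𝔭 b = β, ord P θ = w, P.ramificationIdx R = e at *
  lift α to ℕ using hα
  lift β to ℕ using hβ
  lift w to ℕ using hw
  rw [min_le_iff] at h₁
  norm_cast at *
  by_contra! hlt
  have h : e * β ≤ (n + 1) * w := h₁.resolve_left (by linarith)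
  nlinarith

end Root

theorem ncard_eq_one_le_one_of_sum_mul_eq {ι : Type*} [Fintype ι] {e f w : ι → ℕ} {n α β : ℕ}
    (hf : ∀ i, 0 < f i) (hef : ∑ i, e i * f i = n + 1) (hfw : ∑ i, f i * w i ≤ β)
    (hslope : (n + 1) * α < n * β) (hw : ∀ i, e i * α ≤ n * w i)
    (hw_one : ∀ i, e i = 1 → α + w i = β) : {i | e i = 1}.ncard ≤ 1 := by
  -- Each `i` with `e i = 1` uses up a slack of at least `γ + 1`, and no more is available in total.
  obtain ⟨γ, hγ⟩ := Nat.exists_eq_add_of_lt hslope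
  have hterm (i : ι) :
      e i * f i * α + (if e i = 1 then γ + 1 else 0) ≤ n * (f i * w i) := by
    split_ifs with he
    · have hnw : n * w i = α + (γ + 1) := by
        have := hw_one i he
        nlinarith
      rw [he, one_mul, mul_left_comm, hnw, mul_add]
      gcongr
      exact Nat.le_mul_of_pos_left _ (hf i)
    · have := hw i
      nlinarith
  have h := Finset.sum_le_sum fun i (_ : i ∈ Finset.univ) ↦ hterm i
  rw [Finset.sum_add_distrib, ← Finset.sum_mul, hef, ← Finset.mul_sum, ← Finset.sum_filter,
    Finset.sum_const, smul_eq_mul] at h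
  rw [Set.ncard_eq_toFinset_card', Set.toFinset_ofPred]
  nlinarith

variable {n : ℕ} {a b : R} {θ : S} [Module.Free R S] [Module.Finite R S]
  [PerfectField (FractionRing R)] [𝔭.IsMaximal]

theorem sum_inertiaDeg_mul_ord_le_ord_of_charpoly_lmul_eq [Fintype (𝔭.primesOver S)]
    (h𝔭 : 𝔭 ≠ ⊥) (hn : n ≠ 0) (hθ : (Algebra.lmul R S θ).charpoly = X ^ n + C a * X + C b) :
    ∑ P : 𝔭.primesOver S, P.1.inertiaDeg R * ord P.1 θ ≤ ord 𝔭 b := by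
  have hspan := Ideal.span_singleton_eq_span_singleton.mpr
    (associated_norm_of_charpoly_lmul_eq hn hθ)
  rw [ord, ← hspan]
  exact sum_inertiaDeg_mul_ord_le_ord_norm 𝔭 h𝔭 θ

theorem ncard_ramificationIdx_eq_one_le_one (h𝔭 : 𝔭 ≠ ⊥)
    (hθ : (Algebra.lmul R S θ).charpoly = X ^ (n + 1) + C a * X + C b) (hb0 : b ≠ 0)
    (ha : a ∈ 𝔭) (hb : b ∈ 𝔭) (hred : ¬ (a ∈ 𝔭 ^ n ∧ b ∈ 𝔭 ^ (n + 1))) :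
    {P : 𝔭.primesOver S | P.1.ramificationIdx R = 1}.ncard ≤ 1 := by
  have hn : n ≠ 0 := by
    rintro rfl
    simp [hb] at hred
  have hroot := pow_add_mul_add_eq_zero_of_charpoly_lmul_eq hθ
  have hθ0 : θ ≠ 0 := by
    rintro rfl
    simp [hb0] at hroot
  obtain h | ⟨P₀, hP₀⟩ := {P : 𝔭.primesOver S | P.1.ramificationIdx R = 1}.eq_empty_or_nonempty
  · simp [h]
  have hbot (P : 𝔭.primesOver S) : P.1 ≠ ⊥ := Ideal.ne_bot_of_liesOver_of_ne_bot h𝔭 P.1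
  have hunram (P : 𝔭.primesOver S) (he : P.1.ramificationIdx R = 1) :=
    ord_add_ord_eq_of_ramificationIdx_eq_one 𝔭 h𝔭 hroot hb0 ha hb hred he
  have hram (P : 𝔭.primesOver S) :=
    ramificationIdx_mul_ord_le 𝔭 (P := P.1) h𝔭 hroot hb0
  have hnorm := sum_inertiaDeg_mul_ord_le_ord_of_charpoly_lmul_eq 𝔭 h𝔭 n.succ_ne_zero hθ
  have hsum := Ideal.sum_ramification_inertia_eq_finrank 𝔭 S
  rw [finrank_eq_of_charpoly_lmul_eq (by omega) hθ] at hsum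
  choose w hw using fun P : 𝔭.primesOver S ↦ ENat.ne_top_iff_exists.mp (ord_ne_top (hbot P) hθ0)
  simp only [← hw] at hnorm hunram hram
  obtain ⟨β, hβ⟩ := ENat.ne_top_iff_exists.mp (ord_ne_top h𝔭 hb0)
  obtain ⟨α, hα⟩ : ∃ α : ℕ, α = ord 𝔭 a := ENat.ne_top_iff_exists.mp fun h ↦ by
    simpa [h, ← hβ] using (hunram P₀ hP₀).1
  simp only [← hα, ← hβ] at hnorm hunram hram
  norm_cast at hnorm hunram hram
  have hslope : (n + 1) * α < n * β := by
    have := hunram P₀ hP₀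
    nlinarith
  exact ncard_eq_one_le_one_of_sum_mul_eq (fun P ↦ Ideal.inertiaDeg_pos P.1 R) hsum hnorm hslope
    (fun P ↦ hram P hslope) fun P he ↦ (hunram P he).1

end OrdTrinomial

theorem adjoin_singleton_smul {F A : Type*} [Field F] [Ring A] [Algebra F A] {c : F} (hc : c ≠ 0)
    (x : A) : Algebra.adjoin F {c • x} = Algebra.adjoin F {x} := by
  refine le_antisymm (Algebra.adjoin_singleton_le ?_) (Algebra.adjoin_singleton_le ?_)
  · exact Subalgebra.smul_mem _ (Algebra.self_mem_adjoin_singleton F x) c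
  · have := Subalgebra.smul_mem _ (Algebra.self_mem_adjoin_singleton F (c • x)) c⁻¹
    rwa [inv_smul_smul₀ hc] at this

theorem exists_reduced_trinomial {K : Type*} [Field K] [CharZero K] {n m : ℕ} (hn : n ≠ 0)
    (hm : 1 < m) {a b : ℤ} (hb : b ≠ 0) {θ : K} (hθ : θ ^ n + a * θ + b = 0) :
    ∃ (a' b' : ℤ) (θ' : K), b' ≠ 0 ∧ Algebra.adjoin ℚ {θ'} = Algebra.adjoin ℚ {θ} ∧
      θ' ^ n + a' * θ' + b' = 0 ∧ ¬ ((m : ℤ) ^ (n - 1) ∣ a' ∧ (m : ℤ) ^ n ∣ b') := by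
  have hm0 : (m : K) ≠ 0 := Nat.cast_ne_zero.mpr (by omega)
  induction h : b.natAbs using Nat.strong_induction_on generalizing a b θ with
  | _ N ih =>
    subst h
    by_cases hdvd : (m : ℤ) ^ (n - 1) ∣ a ∧ (m : ℤ) ^ n ∣ b
    · obtain ⟨⟨a, rfl⟩, b, rfl⟩ := hdvd
      have hb' : b ≠ 0 := right_ne_zero_of_mul hb
      have hθ' : (θ / m) ^ n + a * (θ / m) + b = 0 := by
        refine (mul_eq_zero_iff_left (pow_ne_zero n hm0)).mp (.trans ?_ hθ)
        push_cast
        rw [mul_add, mul_add, ← mul_pow, mul_div_cancel₀ _ hm0, ← pow_sub_one_mul hn (m : K)]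
        field_simp
      have hlt : b.natAbs < ((m : ℤ) ^ n * b).natAbs := by
        rw [Int.natAbs_mul, Int.natAbs_pow, Int.natAbs_natCast]
        exact lt_mul_of_one_lt_left (Int.natAbs_pos.mpr hb') (Nat.one_lt_pow hn hm)
      obtain ⟨a', b', θ', hb₀, hadj, h⟩ := ih _ hlt hb' hθ' rfl
      refine ⟨a', b', θ', hb₀, hadj.trans ?_, h⟩
      have hm' : (m : ℚ)⁻¹ ≠ 0 := inv_ne_zero (Nat.cast_ne_zero.mpr (by omega))
      rw [← adjoin_singleton_smul hm' θ, Algebra.smul_def, map_inv₀, map_natCast, div_eq_inv_mul]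
    · exact ⟨a, b, θ, hb, rfl, hθ, hdvd⟩

theorem ncard_inertiaDeg_eq_one_le_natCard_quotient {R S : Type*} [CommRing R] [IsDedekindDomain R]
    [PerfectField (FractionRing R)] [CommRing S] [IsDedekindDomain S] [Algebra R S]
    [Module.Free R S] [Module.Finite R S] {𝔭 : Ideal R} [𝔭.IsMaximal] [Finite (R ⧸ 𝔭)] {p : ℕ}
    [CharP (R ⧸ 𝔭) p] (h𝔭 : 𝔭 ≠ ⊥) {n : ℕ} {a b : R} {θ : S}
    (hθ : (Algebra.lmul R S θ).charpoly = X ^ n + C a * X + C b) (hb : b ≠ 0)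
    (hred : ¬ (a ∈ 𝔭 ^ (n - 1) ∧ b ∈ 𝔭 ^ n)) (hpn : ¬ p ∣ n * (n - 1)) (hlt : n < 2 * p) :
    {P : 𝔭.primesOver S | P.1.inertiaDeg R = 1}.ncard ≤ Nat.card (R ⧸ 𝔭) := by
  have hn : 1 < n := by
    by_contra! h
    interval_cases n <;> simp at hpn
  by_cases hab : a ∈ 𝔭 ∧ b ∈ 𝔭
  · have : Finite (𝔭.primesOver S) := Algebra.QuasiFinite.finite_primesOver 𝔭
    have hp := le_natCard_of_charP (R ⧸ 𝔭) p
    have hle := Set.ncard_le_card {P : 𝔭.primesOver S | P.1.inertiaDeg R = 1}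
    have htwo := two_mul_card_primesOver_le (S := S) 𝔭
    rw [finrank_eq_of_charpoly_lmul_eq hn hθ] at htwo
    obtain ⟨m, rfl⟩ := Nat.exists_eq_add_of_lt hn
    have hone := ncard_ramificationIdx_eq_one_le_one 𝔭 h𝔭 hθ hb hab.1 hab.2 hred
    omega
  · refine (ncard_inertiaDeg_eq_one_le_card_roots_charpoly 𝔭 θ).trans ?_
    rw [hθ]
    simp only [Polynomial.map_add, Polynomial.map_mul, Polynomial.map_pow, map_X, map_C]
    have hpn' : ((n * (n - 1) : ℕ) : R ⧸ 𝔭) ≠ 0 := (CharP.cast_eq_zero_iff _ p _).not.mpr hpn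
    rw [Nat.cast_mul, Nat.cast_pred (by omega), mul_ne_zero_iff, sub_ne_zero] at hpn'
    let := Ideal.Quotient.field 𝔭
    refine card_roots_trinomial_le hpn'.1 hpn'.2 ?_
    rwa [Ideal.Quotient.eq_zero_iff_mem, Ideal.Quotient.eq_zero_iff_mem]

theorem exists_linearIndependentPowersMod_of_charpoly_lmul_eq {R S : Type*} [CommRing R]
    [IsDedekindDomain R] [PerfectField (FractionRing R)] [CommRing S] [IsDedekindDomain S]
    [Algebra R S] [Module.Free R S] [Module.Finite R S] {𝔭 : Ideal R} [𝔭.IsMaximal]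
    [Finite (R ⧸ 𝔭)] {p : ℕ} [CharP (R ⧸ 𝔭) p] (h𝔭 : 𝔭 ≠ ⊥) {n : ℕ} {a b : R} {θ : S}
    (hθ : (Algebra.lmul R S θ).charpoly = X ^ n + C a * X + C b) (hb : b ≠ 0)
    (hred : ¬ (a ∈ 𝔭 ^ (n - 1) ∧ b ∈ 𝔭 ^ n)) (hpn : ¬ p ∣ n * (n - 1)) (hlt : n < 2 * p) :
    ∃ η : S, LinearIndependentPowersMod 𝔭 η := by
  have hn : 1 < n := by
    by_contra! h
    interval_cases n <;> simp at hpn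
  let := Ideal.Quotient.field 𝔭
  obtain ⟨g, hinj, hg⟩ := exists_injective_irreducible_natDegree_eq_of_sum_lt (p := p)
    (fun P : 𝔭.primesOver S ↦ (Ideal.inertiaDeg_pos P.1 R).ne')
    (ncard_inertiaDeg_eq_one_le_natCard_quotient h𝔭 hθ hb hred hpn hlt) <| by
      refine lt_of_le_of_lt ?_ hlt
      rw [← finrank_eq_of_charpoly_lmul_eq hn hθ, ← Ideal.sum_ramification_inertia_eq_finrank 𝔭 S]
      exact Finset.sum_le_sum fun P _ ↦
        Nat.le_mul_of_pos_left _ (Ideal.ramificationIdx_pos P.1 R)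
  exact exists_linearIndependentPowersMod 𝔭 h𝔭 hinj hg

theorem exists_charpoly_lmul_eq_reduced_trinomial {K : Type*} [Field K] [NumberField K] {n m : ℕ}
    (hn : 1 < n) (hm : 1 < m) {a b : ℤ} (hirr : Irreducible (X ^ n + C (a : ℚ) * X + C (b : ℚ)))
    {θ : K} (hθ : aeval θ (X ^ n + C (a : ℚ) * X + C (b : ℚ)) = 0)
    (hgen : Algebra.adjoin ℚ {θ} = ⊤) :
    ∃ (a' b' : ℤ) (η : 𝓞 K), b' ≠ 0 ∧
      (Algebra.lmul ℤ (𝓞 K) η).charpoly = X ^ n + C a' * X + C b' ∧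
      ¬ ((m : ℤ) ^ (n - 1) ∣ a' ∧ (m : ℤ) ^ n ∣ b') := by
  have hb : b ≠ 0 := by
    rintro rfl
    have hdeg := degree_eq_one_of_irreducible_of_root hirr (x := 0) (by simp; omega)
    rw [degree_eq_natDegree hirr.ne_zero, natDegree_trinomial_eq hn] at hdeg
    norm_cast at hdeg
    omega
  have hrank : Module.finrank ℤ (𝓞 K) = n := by
    rw [RingOfIntegers.rank, ← (Field.primitive_element_iff_minpoly_natDegree_eq ℚ θ).mp,
      ← minpoly.eq_of_irreducible_of_monic hirr hθ (monic_trinomial hn _ _),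
      natDegree_trinomial_eq hn]
    rwa [IntermediateField.adjoin_simple_eq_top_iff_of_isAlgebraic (.of_finite ℚ _)]
  obtain ⟨a', b', θ', hb', hadj, hθ', hred⟩ := exists_reduced_trinomial (n := n) (by omega) hm hb
    (by simpa using hθ)
  have hroot : aeval θ' (X ^ n + C a' * X + C b') = 0 := by simpa using hθ'
  obtain ⟨η, rfl⟩ : ∃ η : 𝓞 K, (η : K) = θ' :=
    ⟨⟨θ', _, monic_trinomial hn a' b', hroot⟩, rfl⟩
  refine ⟨a', b', η, hb', ?_, hred⟩
  refine charpoly_lmul_eq_of_natDegree_minpoly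
    (adjoin_rat_eq_top_iff_natDegree_minpoly.mp (hadj.trans hgen)) (monic_trinomial hn a' b')
    (by rw [natDegree_trinomial_eq hn, hrank]) (RingOfIntegers.ext ?_)
  simpa using hθ'

theorem common_index_divisor_le_three_general {n : ℕ} {a b : ℤ}
    (hirr : Irreducible (X ^ n + C (a : ℚ) * X + C (b : ℚ)))
    {K : Type*} [Field K] [NumberField K] {θ : K}
    (hθ : aeval θ (X ^ n + C (a : ℚ) * X + C (b : ℚ)) = 0)
    (hgen : Algebra.adjoin ℚ {θ} = ⊤) {p : ℕ} (hp : p.Prime)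
    (hdvd : ∀ η : 𝓞 K, Algebra.adjoin ℚ {(η : K)} = ⊤ →
      p ∣ (Algebra.adjoin ℤ {η}).toSubring.toAddSubgroup.index) :
    p ∣ n * (n - 1) ∨ 2 * p ≤ n := by
  by_contra! ⟨hpn, hlt⟩
  have hn : 1 < n := by
    by_contra! h
    interval_cases n <;> simp at hpn
  have : Fact p.Prime := ⟨hp⟩
  have hpZ : Prime (p : ℤ) := Nat.prime_iff_prime_int.mp hp
  have hmax : (Ideal.span {(p : ℤ)}).IsMaximal :=
    PrincipalIdealRing.isMaximal_of_irreducible hpZ.irreducible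
  have : Finite (ℤ ⧸ Ideal.span {(p : ℤ)}) :=
    Ideal.finiteQuotientOfFreeOfNeBot _ (by simpa using hp.ne_zero)
  have : CharP (ℤ ⧸ Ideal.span {(p : ℤ)}) p := CharP.quotient ℤ p hpZ.not_isUnit
  obtain ⟨a', b', θ', hb', hθ', hred⟩ :=
    exists_charpoly_lmul_eq_reduced_trinomial hn hp.one_lt hirr hθ hgen
  obtain ⟨η, hη⟩ := exists_linearIndependentPowersMod_of_charpoly_lmul_eq
    (𝔭 := Ideal.span {(p : ℤ)}) (by simpa using hp.ne_zero) hθ' hb'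
    (by simpa [Ideal.span_singleton_pow, Ideal.mem_span_singleton] using hred) hpn hlt
  exact hη.not_dvd_index hp (hdvd η (hη.adjoin_eq_top hmax.ne_top))

/-- A prime dividing the index `i(K)` of the degree-9 field defined by
`x^9 + a x + b` (i.e. dividing `(ℤ_K : ℤ[η])` for every generator `η`) is `2` or `3`. -/
theorem common_index_divisor_le_three (a b : ℤ) (hab : a * b ≠ 0)
    (hFirr : Irreducible (X ^ 9 + C (a : ℚ) * X + C (b : ℚ)))
    (K : Type*) [Field K] [NumberField K] (θ : K)
    (hθ : Polynomial.aeval θ (X ^ 9 + C (a : ℚ) * X + C (b : ℚ)) = 0)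
    (hgen : Algebra.adjoin ℚ {θ} = ⊤)
    (p : ℕ) (hp : p.Prime)
    (hdvd : ∀ η : 𝓞 K, Algebra.adjoin ℚ {(η : K)} = ⊤ →
        p ∣ (Algebra.adjoin ℤ {η} : Subalgebra ℤ (𝓞 K)).toSubring.toAddSubgroup.index) :
    p = 2 ∨ p = 3 := by
  rcases common_index_divisor_le_three_general hFirr hθ hgen hp hdvd with h | h
  · rw [show 9 * (9 - 1) = 2 ^ 3 * 3 ^ 2 by norm_num, hp.dvd_mul] at h
    exact h.imp
      (fun h ↦ (Nat.prime_dvd_prime_iff_eq hp Nat.prime_two).mp (hp.dvd_of_dvd_pow h))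
      (fun h ↦ (Nat.prime_dvd_prime_iff_eq hp Nat.prime_three).mp (hp.dvd_of_dvd_pow h))
  · have hp2 := hp.two_le
    have hp4 : p ≠ 4 := by
      rintro rfl
      norm_num at hp
    omega
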